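/- arXiv:1703.08982 — 5 statements merged into one kernel-verified Lean document; each statement's English description precedes it below -/
import Mathlib

section
/- Let Π be a datalogMTL program and D a data instance such that (Π, D) is consistent. Then there exists a model C of (Π, D) (whose domain is the set of constants occurring in Π or D, under the standard name assumption) which is minimal in the following sense: for every model M of (Π, D), every predicate P occurring in Π or D, every tuple c̄ of constants from Π or D of matching arity, and every t ∈ ℝ, if C, t ⊨ P(c̄) then M, t ⊨ P(c̄). -/
namespace DatalogMTL

/-- A dyadic rational: a real number of the form `a / 2 ^ m` with `a : ℤ`, `m : ℕ`. -/
def IsDyadicR (x : ℝ) : Prop := ∃ (a : ℤ) (m : ℕ), x = (a : ℝ) / 2 ^ m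

/-- An extended real which is `±∞` or a dyadic rational. -/
def IsDyadicE (x : EReal) : Prop :=
  x = ⊥ ∨ x = ⊤ ∨ ∃ y : ℝ, IsDyadicR y ∧ x = (y : EReal)

/-- An interval of the real line, possibly unbounded, given by its two (extended-real)
endpoints and two flags recording whether each endpoint is included. -/
structure RIntv where
  lo : EReal
  hi : EReal
  loClosed : Bool
  hiClosed : Bool

namespace RIntv

/-- The set of reals belonging to the interval. -/
def toSet (ι : RIntv) : Set ℝ :=
  {t : ℝ | (if ι.loClosed then ι.lo ≤ (t : EReal) else ι.lo < (t : EReal)) ∧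
           (if ι.hiClosed then (t : EReal) ≤ ι.hi else (t : EReal) < ι.hi)}

/-- Both endpoints are dyadic rationals or infinite. -/
def Dyadic (ι : RIntv) : Prop := IsDyadicE ι.lo ∧ IsDyadicE ι.hi

/-- `ι` is a legitimate interval: nonempty, with dyadic (or infinite) endpoints. -/
def IsIntv (ι : RIntv) : Prop := ι.Dyadic ∧ ι.toSet.Nonempty

/-- `ι` is a range: a (nonempty, dyadic) interval with nonnegative endpoints. -/
def IsRange (ι : RIntv) : Prop := ι.IsIntv ∧ (0 : EReal) ≤ ι.lo

/-- The finite numbers occurring as endpoints of `ι`. -/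
def nums (ι : RIntv) : Set ℝ := {x : ℝ | ι.lo = (x : EReal) ∨ ι.hi = (x : EReal)}

/-- The closed interval `[a, b]`. -/
def icc (a b : ℝ) : RIntv := ⟨(a : EReal), (b : EReal), true, true⟩
/-- The half-open interval `[a, b)`. -/
def ico (a b : ℝ) : RIntv := ⟨(a : EReal), (b : EReal), true, false⟩
/-- The open interval `(a, b)`. -/
def ioo (a b : ℝ) : RIntv := ⟨(a : EReal), (b : EReal), false, false⟩

end RIntv

/-- An individual term: a variable or a constant. -/
inductive Term (V C : Type) where
  | var : V → Term V C
  | const : C → Term V C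

/-- Atoms of datalogMTL, over variables `V`, constants `C` and
predicate symbols `P` with arity function `ar`. -/
inductive Atom (V C P : Type) (ar : P → ℕ) : Type where
  | pred (p : P) (args : Fin (ar p) → Term V C)
  | top
  | neq (t t' : Term V C)
  | boxPlus (ρ : RIntv) (A : Atom V C P ar)
  | boxMinus (ρ : RIntv) (A : Atom V C P ar)
  | diaPlus (ρ : RIntv) (A : Atom V C P ar)
  | diaMinus (ρ : RIntv) (A : Atom V C P ar)
  | untl (ρ : RIntv) (A B : Atom V C P ar)
  | sinc (ρ : RIntv) (A B : Atom V C P ar)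

variable {V C P : Type} {ar : P → ℕ}

/-- The predicate symbol `p` occurs in the atom. -/
def Atom.mentionsPred : Atom V C P ar → P → Prop
  | .pred q _, p => q = p
  | .top, _ => False
  | .neq _ _, _ => False
  | .boxPlus _ A, p => A.mentionsPred p
  | .boxMinus _ A, p => A.mentionsPred p
  | .diaPlus _ A, p => A.mentionsPred p
  | .diaMinus _ A, p => A.mentionsPred p
  | .untl _ A B, p => A.mentionsPred p ∨ B.mentionsPred p
  | .sinc _ A B, p => A.mentionsPred p ∨ B.mentionsPred p

/-- The constants occurring in a term. -/
def Term.consts : Term V C → Set C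
  | .var _ => ∅
  | .const c => {c}

/-- The constants occurring in an atom. -/
def Atom.consts : Atom V C P ar → Set C
  | .pred _ args => {c : C | ∃ i, args i = Term.const c}
  | .top => ∅
  | .neq t t' => t.consts ∪ t'.consts
  | .boxPlus _ A => A.consts
  | .boxMinus _ A => A.consts
  | .diaPlus _ A => A.consts
  | .diaMinus _ A => A.consts
  | .untl _ A B => A.consts ∪ B.consts
  | .sinc _ A B => A.consts ∪ B.consts

/-- The variables occurring in an atom. -/
def Atom.vars : Atom V C P ar → Set V
  | .pred _ args => {v : V | ∃ i, args i = Term.var v}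
  | .top => ∅
  | .neq t t' => {v : V | t = Term.var v ∨ t' = Term.var v}
  | .boxPlus _ A => A.vars
  | .boxMinus _ A => A.vars
  | .diaPlus _ A => A.vars
  | .diaMinus _ A => A.vars
  | .untl _ A B => A.vars ∪ B.vars
  | .sinc _ A B => A.vars ∪ B.vars

/-- The atom is admissible as the head of a rule: it contains no
`◇⁺`, `◇⁻`, `U`, `S`. -/
def Atom.HeadOK : Atom V C P ar → Prop
  | .pred _ _ => True
  | .top => True
  | .neq _ _ => True
  | .boxPlus _ A => A.HeadOK
  | .boxMinus _ A => A.HeadOK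
  | .diaPlus _ _ => False
  | .diaMinus _ _ => False
  | .untl _ _ _ => False
  | .sinc _ _ _ => False

/-- All intervals constraining temporal operators in the atom are genuine ranges. -/
def Atom.RangesOK : Atom V C P ar → Prop
  | .pred _ _ => True
  | .top => True
  | .neq _ _ => True
  | .boxPlus ρ A => ρ.IsRange ∧ A.RangesOK
  | .boxMinus ρ A => ρ.IsRange ∧ A.RangesOK
  | .diaPlus ρ A => ρ.IsRange ∧ A.RangesOK
  | .diaMinus ρ A => ρ.IsRange ∧ A.RangesOK
  | .untl ρ A B => ρ.IsRange ∧ A.RangesOK ∧ B.RangesOK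
  | .sinc ρ A B => ρ.IsRange ∧ A.RangesOK ∧ B.RangesOK

/-- The finite numbers occurring as endpoints of ranges in the atom. -/
def Atom.nums : Atom V C P ar → Set ℝ
  | .pred _ _ => ∅
  | .top => ∅
  | .neq _ _ => ∅
  | .boxPlus ρ A => ρ.nums ∪ A.nums
  | .boxMinus ρ A => ρ.nums ∪ A.nums
  | .diaPlus ρ A => ρ.nums ∪ A.nums
  | .diaMinus ρ A => ρ.nums ∪ A.nums
  | .untl ρ A B => ρ.nums ∪ A.nums ∪ B.nums
  | .sinc ρ A B => ρ.nums ∪ A.nums ∪ B.nums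

/-- A rule `head ← body`; `head = none` encodes `⊥`. -/
structure Rule (V C P : Type) (ar : P → ℕ) where
  head : Option (Atom V C P ar)
  body : List (Atom V C P ar)

/-- Well-formedness of a rule: nonempty body, proper ranges everywhere, the head
contains no diamond/until/since operators, and every head variable occurs in the body. -/
def Rule.WF (r : Rule V C P ar) : Prop :=
  r.body ≠ [] ∧ (∀ A ∈ r.body, A.RangesOK) ∧
    ∀ A, r.head = some A →
      A.HeadOK ∧ A.RangesOK ∧ ∀ v ∈ A.vars, ∃ B ∈ r.body, v ∈ B.vars

def Rule.mentionsPred (r : Rule V C P ar) (p : P) : Prop :=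
  (∃ A ∈ r.body, A.mentionsPred p) ∨ (∃ A, r.head = some A ∧ A.mentionsPred p)

def Rule.consts (r : Rule V C P ar) : Set C :=
  {c : C | (∃ A ∈ r.body, c ∈ A.consts) ∨ (∃ A, r.head = some A ∧ c ∈ A.consts)}

def Rule.nums (r : Rule V C P ar) : Set ℝ :=
  {x : ℝ | (∃ A ∈ r.body, x ∈ A.nums) ∨ (∃ A, r.head = some A ∧ x ∈ A.nums)}

/-- A datalogMTL program: a finite set (list) of rules. -/
structure Program (V C P : Type) (ar : P → ℕ) where
  rules : List (Rule V C P ar)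

def Program.WF (Pr : Program V C P ar) : Prop := ∀ r ∈ Pr.rules, r.WF

def Program.MentionsPred (Pr : Program V C P ar) (p : P) : Prop :=
  ∃ r ∈ Pr.rules, r.mentionsPred p

def Program.consts (Pr : Program V C P ar) : Set C := {c : C | ∃ r ∈ Pr.rules, c ∈ r.consts}

def Program.nums (Pr : Program V C P ar) : Set ℝ := {x : ℝ | ∃ r ∈ Pr.rules, x ∈ r.nums}

/-- The dependence relation `p ⋖ q`: some rule of `Pr` has `p` in its head
and `q` in its body. -/
def Program.DependsOn (Pr : Program V C P ar) (p q : P) : Prop :=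
  ∃ r ∈ Pr.rules, (∃ A, r.head = some A ∧ A.mentionsPred p) ∧ (∃ B ∈ r.body, B.mentionsPred q)

/-- `Pr` is nonrecursive: no predicate depends on itself through `⋖⁺`. -/
def Program.Nonrecursive (Pr : Program V C P ar) : Prop :=
  ¬ ∃ p : P, Relation.TransGen Pr.DependsOn p p

/-- A fact `P(c̄)@ι`. -/
structure DFact (C P : Type) (ar : P → ℕ) where
  pred : P
  args : Fin (ar pred) → C
  ival : RIntv

/-- A data instance: a finite set (list) of facts. -/
abbrev Data (C P : Type) (ar : P → ℕ) := List (DFact C P ar)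

def Data.WF (D : Data C P ar) : Prop := ∀ f ∈ D, f.ival.Dyadic ∧ f.ival.toSet.Nonempty

def Data.MentionsPred (D : Data C P ar) (p : P) : Prop := ∃ f ∈ D, f.pred = p

def Data.consts (D : Data C P ar) : Set C := {c : C | ∃ f ∈ D, ∃ i, f.args i = c}

def Data.nums (D : Data C P ar) : Set ℝ := {x : ℝ | ∃ f ∈ D, x ∈ f.ival.nums}

/-- An interpretation: a nonempty domain containing the constants (standard name
assumption), and a time-dependent extension of every predicate. -/
structure Interp (C P : Type) (ar : P → ℕ) where
  Dom : Type
  domNonempty : Nonempty Dom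
  constVal : C → Dom
  constInj : Function.Injective constVal
  sat : (p : P) → (Fin (ar p) → Dom) → ℝ → Prop

/-- Evaluation of a term under an assignment `ν` (constants evaluate to themselves). -/
def Term.eval (M : Interp C P ar) (ν : V → M.Dom) : Term V C → M.Dom
  | .var v => ν v
  | .const c => M.constVal c

/-- Satisfaction of an atom at a time point, under an assignment `ν`. -/
def Interp.satA (M : Interp C P ar) (ν : V → M.Dom) : Atom V C P ar → ℝ → Prop
  | .pred p args, t => M.sat p (fun i => (args i).eval M ν) t
  | .top, _ => True
  | .neq τ τ', _ => τ.eval M ν ≠ τ'.eval M ν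
  | .boxPlus ρ A, t => ∀ s : ℝ, s - t ∈ ρ.toSet → M.satA ν A s
  | .boxMinus ρ A, t => ∀ s : ℝ, t - s ∈ ρ.toSet → M.satA ν A s
  | .diaPlus ρ A, t => ∃ s : ℝ, s - t ∈ ρ.toSet ∧ M.satA ν A s
  | .diaMinus ρ A, t => ∃ s : ℝ, t - s ∈ ρ.toSet ∧ M.satA ν A s
  | .untl ρ A B, t => ∃ t' : ℝ, t' - t ∈ ρ.toSet ∧ M.satA ν B t' ∧ ∀ s ∈ Set.Ioo t t', M.satA ν A s
  | .sinc ρ A B, t => ∃ t' : ℝ, t - t' ∈ ρ.toSet ∧ M.satA ν B t' ∧ ∀ s ∈ Set.Ioo t' t, M.satA ν A s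

/-- `M` satisfies a rule: at every time and under every assignment, the head holds
whenever all body atoms hold (`⊥` never holds). -/
def Interp.satRule (M : Interp C P ar) (r : Rule V C P ar) : Prop :=
  ∀ (ν : V → M.Dom) (t : ℝ), (∀ A ∈ r.body, M.satA ν A t) →
    (match r.head with
     | none => False
     | some A => M.satA ν A t)

/-- `M` is a model of `(Pr, D)`. -/
def IsModel (M : Interp C P ar) (Pr : Program V C P ar) (D : Data C P ar) : Prop :=
  (∀ r ∈ Pr.rules, M.satRule r) ∧
  (∀ f ∈ D, ∀ t ∈ f.ival.toSet, M.sat f.pred (fun i => M.constVal (f.args i)) t)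

/-- `(Pr, D)` is consistent: some model exists. -/
def Consistent (Pr : Program V C P ar) (D : Data C P ar) : Prop :=
  ∃ M : Interp C P ar, IsModel M Pr D

/-- `(σ, ι)` is a certain answer to `(Pr, Q(ts)@x)` over `D`: for every `t ∈ ι`,
every model `M` of `(Pr, D)` and every assignment `ν` mapping the variables of `ts`
to the corresponding constants (given by `σ`), `Q(ts)` holds at `t`. -/
def CertainAnswer (Pr : Program V C P ar) (D : Data C P ar)
    (Q : P) (ts : Fin (ar Q) → Term V C) (σ : V → C) (ι : RIntv) : Prop :=
  ∀ t ∈ ι.toSet, ∀ M : Interp C P ar, IsModel M Pr D →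
    ∀ ν : V → M.Dom,
      (∀ (v : V) (i : Fin (ar Q)), ts i = Term.var v → ν v = M.constVal (σ v)) →
        M.satA ν (Atom.pred Q ts) t

end DatalogMTL

/-!
Datalog rules have the model intersection property: given models `M i` and name-preserving
embeddings of one domain into all of them, interpret each predicate on that domain by the facts
true in every `M i`. Body atoms are monotone, so whatever holds in the intersection holds in each
`M i`; hence each `M i` satisfies the head, and heads, containing no existential operator, commute
with intersections. The set of constants (or a single point, if there are none) embeds into every
interpretation, and intersecting all models along these embeddings gives the canonical model.
-/

namespace DatalogMTL

namespace Interp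

variable {V C P : Type} {ar : P → ℕ}

/-- The embedding `f` of domains is a homomorphism of interpretations: it preserves the constants
and the truth of predicates at every time. Injectivity is required for the inequality atoms. -/
structure IsHom (N M : Interp C P ar) (f : N.Dom ↪ M.Dom) : Prop where
  map_constVal : ∀ c, f (N.constVal c) = M.constVal c
  map_sat : ∀ {p a t}, N.sat p a t → M.sat p (f ∘ a) t

namespace IsHom

variable {N M : Interp C P ar} {f : N.Dom ↪ M.Dom}

theorem eval_comp (hf : IsHom N M f) (ν : V → N.Dom) (τ : Term V C) :
    τ.eval M (f ∘ ν) = f (τ.eval N ν) := by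
  cases τ with
  | var v => rfl
  | const c => exact (hf.map_constVal c).symm

theorem satA_comp (hf : IsHom N M f) {ν : V → N.Dom} {A : Atom V C P ar} {t : ℝ}
    (h : N.satA ν A t) : M.satA (f ∘ ν) A t := by
  induction A generalizing t with
  | pred p args =>
    simp only [satA, hf.eval_comp]
    exact hf.map_sat h
  | top => trivial
  | neq τ τ' =>
    simp only [satA, hf.eval_comp]
    exact f.injective.ne h
  | boxPlus ρ A ih => exact fun s hs => ih (h s hs)
  | boxMinus ρ A ih => exact fun s hs => ih (h s hs)
  | diaPlus ρ A ih => exact h.imp fun s ⟨hs, hA⟩ => ⟨hs, ih hA⟩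
  | diaMinus ρ A ih => exact h.imp fun s ⟨hs, hA⟩ => ⟨hs, ih hA⟩
  | untl ρ A B ihA ihB =>
    exact h.imp fun t' ⟨ht', hB, hA⟩ => ⟨ht', ihB hB, fun s hs => ihA (hA s hs)⟩
  | sinc ρ A B ihA ihB =>
    exact h.imp fun t' ⟨ht', hB, hA⟩ => ⟨ht', ihB hB, fun s hs => ihA (hA s hs)⟩

end IsHom

variable {ι : Type*} {E : Type} [Nonempty E]

/-- The intersection of the interpretations `M i` over the common domain `E`, in which constants
are named by `e`: a predicate holds of a tuple when, for all `i`, it holds in `M i` of the image of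
the tuple under `f i`. -/
def iInter (e : C ↪ E) (M : ι → Interp C P ar) (f : ∀ i, E ↪ (M i).Dom) : Interp C P ar where
  Dom := E
  domNonempty := inferInstance
  constVal := e
  constInj := e.injective
  sat p a t := ∀ i, (M i).sat p (f i ∘ a) t

variable {e : C ↪ E} {M : ι → Interp C P ar} {f : ∀ i, E ↪ (M i).Dom}

theorem isHom_iInter (hf : ∀ i c, f i (e c) = (M i).constVal c) (i : ι) :
    IsHom (iInter e M f) (M i) (f i) where
  map_constVal := hf i
  map_sat h := h i

theorem eval_iInter (hf : ∀ i c, f i (e c) = (M i).constVal c) (ν : V → E) (i : ι)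
    (τ : Term V C) : τ.eval (M i) (f i ∘ ν) = f i (τ.eval (iInter e M f) ν) :=
  (isHom_iInter hf i).eval_comp ν τ

theorem satA_iInter_of_forall [Nonempty ι] (hf : ∀ i c, f i (e c) = (M i).constVal c)
    {ν : V → E} {A : Atom V C P ar} (hA : A.HeadOK) {t : ℝ}
    (h : ∀ i, (M i).satA (f i ∘ ν) A t) : (iInter e M f).satA ν A t := by
  induction A generalizing t with
  | pred p args =>
    intro i
    have hi := h i
    simp only [satA, eval_iInter hf] at hi
    exact hi
  | top => trivial
  | neq τ τ' =>
    have ⟨i⟩ := ‹Nonempty ι›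
    have hi := h i
    simp only [satA, eval_iInter hf] at hi
    exact ne_of_apply_ne (f i) hi
  | boxPlus ρ A ih => exact fun s hs => ih hA fun i => h i s hs
  | boxMinus ρ A ih => exact fun s hs => ih hA fun i => h i s hs
  | diaPlus | diaMinus | untl | sinc => exact hA.elim

theorem satRule_iInter [Nonempty ι] (hf : ∀ i c, f i (e c) = (M i).constVal c)
    {r : Rule V C P ar} (hr : ∀ A, r.head = some A → A.HeadOK) (h : ∀ i, (M i).satRule r) :
    (iInter e M f).satRule r := by
  intro ν t hbody
  have head_holds (i : ι) :=
    h i (f i ∘ ν) t fun A hA => (isHom_iInter hf i).satA_comp (hbody A hA)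
  cases hhead : r.head with
  | none =>
    have ⟨i⟩ := ‹Nonempty ι›
    simpa only [hhead] using head_holds i
  | some A =>
    simp only [hhead] at head_holds
    exact satA_iInter_of_forall hf (hr A hhead) head_holds

theorem isModel_iInter [Nonempty ι] (hf : ∀ i c, f i (e c) = (M i).constVal c)
    {Pr : Program V C P ar} (hPr : ∀ r ∈ Pr.rules, ∀ A, r.head = some A → A.HeadOK)
    {D : Data C P ar} (h : ∀ i, IsModel (M i) Pr D) : IsModel (iInter e M f) Pr D where
  left r hr := satRule_iInter hf (hPr r hr) fun i => (h i).1 r hr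
  right fact hfact t ht i := by
    have hi := (h i).2 fact hfact t ht
    simp only [← hf] at hi
    exact hi

end Interp

theorem exists_domain_embedding_forall_interp (C P : Type) (ar : P → ℕ) :
    ∃ (E : Type) (_ : Nonempty E) (e : C ↪ E), (Nonempty C → Function.Surjective e) ∧
      ∀ M : Interp C P ar, ∃ f : E ↪ M.Dom, ∀ c, f (e c) = M.constVal c := by
  rcases isEmpty_or_nonempty C with hC | hC
  · refine ⟨Unit, inferInstance, .ofIsEmpty, fun ⟨c⟩ => isEmptyElim c, fun M => ?_⟩
    have ⟨d⟩ := M.domNonempty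
    exact ⟨⟨fun _ => d, Function.injective_of_subsingleton _⟩, isEmptyElim⟩
  · exact ⟨C, hC, .refl C, fun _ => Function.surjective_id,
      fun M => ⟨⟨M.constVal, M.constInj⟩, fun _ => rfl⟩⟩

end DatalogMTL

open DatalogMTL in
theorem statement2_general
    {V C P : Type} {ar : P → ℕ}
    (Pr : Program V C P ar) (hPr : ∀ r ∈ Pr.rules, ∀ A, r.head = some A → A.HeadOK)
    (D : Data C P ar) (hcons : Consistent Pr D) :
    ∃ Cm : Interp C P ar, IsModel Cm Pr D ∧ (Nonempty C → Function.Surjective Cm.constVal) ∧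
      ∀ M : Interp C P ar, IsModel M Pr D →
        ∀ (p : P) (cs : Fin (ar p) → C) (t : ℝ),
          Cm.sat p (fun i => Cm.constVal (cs i)) t → M.sat p (fun i => M.constVal (cs i)) t := by
  obtain ⟨E, _, e, he, hE⟩ := exists_domain_embedding_forall_interp C P ar
  choose f hf using hE
  have : Nonempty {M : Interp C P ar // IsModel M Pr D} := nonempty_subtype.mpr hcons
  refine ⟨Interp.iInter e (fun M : {M // IsModel M Pr D} => M.1) fun M => f M.1,
    Interp.isModel_iInter (fun M => hf M.1) hPr Subtype.property, he, fun M hM p cs t h => ?_⟩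
  have hM_sat : M.sat p (fun i => f M (e (cs i))) t := h ⟨M, hM⟩
  simpa only [hf] using hM_sat

open DatalogMTL in
/-- every consistent `(Π, D)` has a minimal (canonical) model `Cm`:
every ground atom `P(c̄)` (with `P` and the constants `c̄` occurring in `Π` or `D`)
true in `Cm` at a time `t` is true at `t` in every model of `(Π, D)`. -/
theorem statement2
    {V C P : Type} {ar : P → ℕ}
    (Pr : Program V C P ar) (hPr : Pr.WF)
    (D : Data C P ar) (hD : Data.WF D)
    (hcons : Consistent Pr D) :
    ∃ Cm : Interp C P ar, IsModel Cm Pr D ∧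
      ∀ M : Interp C P ar, IsModel M Pr D →
        ∀ p : P, (Pr.MentionsPred p ∨ Data.MentionsPred D p) →
          ∀ cs : Fin (ar p) → C, (∀ i, cs i ∈ Pr.consts ∪ Data.consts D) →
            ∀ t : ℝ,
              Cm.sat p (fun i => Cm.constVal (cs i)) t →
                M.sat p (fun i => M.constVal (cs i)) t := by
  obtain ⟨Cm, hCm, -, hmin⟩ :=
    statement2_general Pr (fun r hr A hA => ((hPr r hr).2.2 A hA).1) D hcons
  exact ⟨Cm, hCm, fun M hM p _ cs _ => hmin M hM p cs⟩
end

section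
/- Let Π be a datalogMTL program and D a data instance such that (Π, D) is consistent, and let d > 0 be a real number such that every (finite) number occurring as an endpoint of a range in Π or of an interval in D is an integer multiple of d. Then there exists a minimal model C of (Π, D) (i.e., a model such that every ground atom true in C at a time t is true in every model of (Π, D) at t) with the following homogeneity property: for every predicate P, every tuple c̄ of constants from Π or D, and every k ∈ ℤ, either C, t ⊨ P(c̄) holds for all t in the open interval ((k−1)·d, k·d), or it holds for no t in that interval. -/
/-!
Every model `M` receives a canonical injection from the Herbrand domain, the set of constants.
Declaring a ground atom true at `t` exactly when all models agree on it gives a minimal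
interpretation. It is again a model: bodies are preserved by injective homomorphisms, and heads,
being built without `◇⁺`, `◇⁻`, `U`, `S`, are preserved by intersections.

For homogeneity, an order automorphism `e` of the timeline that commutes with translation by the
numbers of `Π` and fixes those of `D` carries models to models, so the minimal model is invariant
under `e`. For `s`, `t` in the same open section there is such an `e` with `e s = t`: after
rescaling to `d = 1`, raise fractional parts to the power `α` with `{s} ^ α = {t}`.
-/

namespace DatalogMTL

/-! ### Order automorphisms of the line moving points inside a section -/

/-- The order automorphism `e` of the timeline commutes with translation by each number in `X`. -/
def TranslationEquivariant (e : ℝ ≃o ℝ) (X : Set ℝ) : Prop :=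
  ∀ x ∈ X, ∀ t, e (t + x) = e t + x

theorem TranslationEquivariant.mono {e : ℝ ≃o ℝ} {X Y : Set ℝ} (h : TranslationEquivariant e Y)
    (hXY : X ⊆ Y) : TranslationEquivariant e X :=
  fun x hx => h x (hXY hx)

theorem TranslationEquivariant.apply_eq_self {e : ℝ ≃o ℝ} {X : Set ℝ}
    (h : TranslationEquivariant e X) (h0 : e 0 = 0) {x : ℝ} (hx : x ∈ X) : e x = x := by
  simpa only [zero_add, h0] using h x hx 0

/-- The self-map of the real line that keeps integer parts and raises fractional parts to the
power `α`. For `α > 0` it is an order automorphism commuting with integer translations. -/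
noncomputable def fractPow (α t : ℝ) : ℝ := ⌊t⌋ + Int.fract t ^ α

theorem fractPow_add_intCast (α t : ℝ) (n : ℤ) : fractPow α (t + n) = fractPow α t + n := by
  simp only [fractPow, Int.floor_add_intCast, Int.fract_add_intCast, Int.cast_add]
  ring

theorem fractPow_zero {α : ℝ} (hα : α ≠ 0) : fractPow α 0 = 0 := by
  simp [fractPow, Real.zero_rpow hα]

theorem floor_fractPow {α : ℝ} (hα : 0 < α) (t : ℝ) : ⌊fractPow α t⌋ = ⌊t⌋ := by
  have h0 : 0 ≤ Int.fract t ^ α := Real.rpow_nonneg (Int.fract_nonneg t) α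
  have h1 : Int.fract t ^ α < 1 := Real.rpow_lt_one (Int.fract_nonneg t) (Int.fract_lt_one t) hα
  rw [fractPow, Int.floor_intCast_add, Int.floor_eq_zero_iff.2 ⟨h0, h1⟩, add_zero]

theorem fract_fractPow {α : ℝ} (hα : 0 < α) (t : ℝ) :
    Int.fract (fractPow α t) = Int.fract t ^ α := by
  rw [Int.fract, floor_fractPow hα, fractPow, add_sub_cancel_left]

theorem fractPow_strictMono {α : ℝ} (hα : 0 < α) : StrictMono (fractPow α) := by
  intro s t hst
  rcases (Int.floor_mono hst.le).lt_or_eq with hlt | heq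
  · rw [← floor_fractPow hα s, ← floor_fractPow hα t] at hlt
    exact Int.floor_mono.reflect_lt hlt
  · have hfract : Int.fract s < Int.fract t := by
      rw [Int.fract, Int.fract, heq]
      exact sub_lt_sub_right hst _
    rw [fractPow, fractPow, heq]
    gcongr

theorem fractPow_fractPow_inv {α : ℝ} (hα : 0 < α) (t : ℝ) : fractPow α (fractPow α⁻¹ t) = t := by
  have hα' : 0 < α⁻¹ := inv_pos.2 hα
  rw [fractPow, floor_fractPow hα', fract_fractPow hα',
    Real.rpow_inv_rpow (Int.fract_nonneg t) hα.ne', Int.floor_add_fract]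

theorem exists_fractPow_eq {n : ℤ} {s t : ℝ} (hs : s ∈ Set.Ioo (n : ℝ) (n + 1))
    (ht : t ∈ Set.Ioo (n : ℝ) (n + 1)) : ∃ α, 0 < α ∧ fractPow α s = t := by
  have floor_eq : ∀ u ∈ Set.Ioo (n : ℝ) (n + 1), ⌊u⌋ = n :=
    fun u hu => Int.floor_eq_iff.2 ⟨hu.1.le, hu.2⟩
  have fract_pos : ∀ u ∈ Set.Ioo (n : ℝ) (n + 1), 0 < Int.fract u := fun u hu => by
    rw [Int.fract, floor_eq u hu]
    exact sub_pos.2 hu.1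
  refine ⟨Real.logb (Int.fract s) (Int.fract t),
    Real.logb_pos_of_base_lt_one (fract_pos s hs) (Int.fract_lt_one s) (fract_pos t ht)
      (Int.fract_lt_one t), ?_⟩
  rw [fractPow, Real.rpow_logb (fract_pos s hs) (Int.fract_lt_one s).ne (fract_pos t ht),
    floor_eq s hs, ← floor_eq t ht, Int.floor_add_fract]

theorem exists_translationEquivariant_apply_eq {d : ℝ} (hd : 0 < d) {k : ℤ} {s t : ℝ}
    (hs : s ∈ Set.Ioo (((k : ℝ) - 1) * d) (k * d)) (ht : t ∈ Set.Ioo (((k : ℝ) - 1) * d) (k * d)) :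
    ∃ e : ℝ ≃o ℝ, TranslationEquivariant e (Set.range fun n : ℤ => (n : ℝ) * d) ∧
      e 0 = 0 ∧ e s = t := by
  have div_mem : ∀ u ∈ Set.Ioo (((k : ℝ) - 1) * d) (k * d),
      u / d ∈ Set.Ioo ((k - 1 : ℤ) : ℝ) ((k - 1 : ℤ) + 1) := fun u hu => by
    rw [Int.cast_sub, Int.cast_one, sub_add_cancel]
    exact ⟨(lt_div_iff₀ hd).2 hu.1, (div_lt_iff₀ hd).2 hu.2⟩
  obtain ⟨α, hα, hst⟩ := exists_fractPow_eq (div_mem s hs) (div_mem t ht)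
  let unitWarp : ℝ ≃o ℝ := (fractPow_strictMono hα).orderIsoOfRightInverse _ _
    (fractPow_fractPow_inv hα)
  let e : ℝ ≃o ℝ := (OrderIso.divRight₀ d hd).trans (unitWarp.trans (OrderIso.mulRight₀ d hd))
  have e_apply : ∀ u, e u = fractPow α (u / d) * d := fun _ => rfl
  refine ⟨e, ?_, ?_, ?_⟩
  · rintro _ ⟨n, rfl⟩ u
    simp only [e_apply, add_div, mul_div_cancel_right₀ _ hd.ne', fractPow_add_intCast, add_mul]
  · rw [e_apply, zero_div, fractPow_zero hα.ne', zero_mul]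
  · rw [e_apply, hst, div_mul_cancel₀ t hd.ne']

/-! ### Changing the time of an interpretation -/

theorem RIntv.mem_toSet_congr {ρ : RIntv} {u v : ℝ} (h : ∀ x ∈ ρ.nums, cmp u x = cmp v x) :
    u ∈ ρ.toSet ↔ v ∈ ρ.toSet := by
  have cmp_endpoint : ∀ y : EReal, (∀ x : ℝ, y = x → cmp u x = cmp v x) →
      cmp (u : EReal) y = cmp (v : EReal) y := by
    intro y hy
    induction y with
    | bot => exact (EReal.bot_lt_coe u).cmp_eq_gt.trans (EReal.bot_lt_coe v).cmp_eq_gt.symm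
    | top => exact (EReal.coe_lt_top u).cmp_eq_lt.trans (EReal.coe_lt_top v).cmp_eq_lt.symm
    | coe x => simpa only [EReal.coe_strictMono.cmp_map_eq] using hy x rfl
  have hlo := cmp_eq_cmp_symm.1 (cmp_endpoint ρ.lo fun x hx => h x (.inl hx))
  have hhi := cmp_endpoint ρ.hi fun x hx => h x (.inr hx)
  simp only [RIntv.toSet, Set.mem_ofPred_eq, le_iff_le_of_cmp_eq_cmp hlo,
    lt_iff_lt_of_cmp_eq_cmp hlo, le_iff_le_of_cmp_eq_cmp hhi, lt_iff_lt_of_cmp_eq_cmp hhi]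

theorem RIntv.apply_mem_toSet_iff {ι : RIntv} {e : ℝ ≃o ℝ} (h : ∀ x ∈ ι.nums, e x = x) (t : ℝ) :
    e t ∈ ι.toSet ↔ t ∈ ι.toSet := by
  refine RIntv.mem_toSet_congr fun x hx => ?_
  calc cmp (e t) x = cmp (e t) (e x) := by rw [h x hx]
    _ = cmp t x := e.strictMono.cmp_map_eq t x

theorem TranslationEquivariant.sub_mem_toSet_iff {ρ : RIntv} {e : ℝ ≃o ℝ}
    (h : TranslationEquivariant e ρ.nums) (s t : ℝ) :
    e s - e t ∈ ρ.toSet ↔ s - t ∈ ρ.toSet := by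
  refine RIntv.mem_toSet_congr fun x hx => ?_
  calc cmp (e s - e t) x = cmp (e s) (e t + x) := by rw [← cmp_add_left (e t), add_sub_cancel]
    _ = cmp (e s) (e (t + x)) := by rw [h x hx t]
    _ = cmp s (t + x) := e.strictMono.cmp_map_eq s (t + x)
    _ = cmp (s - t) x := by rw [← cmp_add_left t (s - t), add_sub_cancel]

theorem forall_mem_Ioo_apply_iff {α β : Type*} [Preorder α] [Preorder β] (e : α ≃o β) {a b : α}
    {Q : β → Prop} :
    (∀ s ∈ Set.Ioo (e a) (e b), Q s) ↔ ∀ s ∈ Set.Ioo a b, Q (e s) := by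
  rw [← e.image_Ioo, Set.forall_mem_image]

variable {V C P : Type} {ar : P → ℕ}

theorem Interp.satRule_iff {M : Interp C P ar} {r : Rule V C P ar} :
    M.satRule r ↔ ∀ (ν : V → M.Dom) (t : ℝ), (∀ A ∈ r.body, M.satA ν A t) →
      ∃ A, r.head = some A ∧ M.satA ν A t := by
  unfold Interp.satRule
  cases r.head <;> simp

/-- The interpretation in which the state of affairs at time `t` is that of `M` at time `e t`. -/
def Interp.timeChange (M : Interp C P ar) (e : ℝ ≃o ℝ) : Interp C P ar where
  Dom := M.Dom
  domNonempty := M.domNonempty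
  constVal := M.constVal
  constInj := M.constInj
  sat p a t := M.sat p a (e t)

theorem Term.eval_timeChange (M : Interp C P ar) (e : ℝ ≃o ℝ) (ν : V → M.Dom) (τ : Term V C) :
    τ.eval (M.timeChange e) ν = τ.eval M ν := by
  cases τ <;> rfl

theorem Interp.satA_timeChange (M : Interp C P ar) (e : ℝ ≃o ℝ) (ν : V → M.Dom)
    {A : Atom V C P ar} (hA : TranslationEquivariant e A.nums) (t : ℝ) :
    (M.timeChange e).satA ν A t ↔ M.satA ν A (e t) := by
  induction A generalizing t with
  | pred p args =>
    simp only [Interp.satA, Term.eval_timeChange]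
    rfl
  | top => exact Iff.rfl
  | neq τ τ' =>
    simp only [Interp.satA, Term.eval_timeChange]
    rfl
  | boxPlus ρ A ih =>
    have hρ := hA.mono Set.subset_union_left
    simp only [Interp.satA, ih (hA.mono Set.subset_union_right)]
    exact (e.surjective.forall.trans (by simp only [hρ.sub_mem_toSet_iff])).symm
  | boxMinus ρ A ih =>
    have hρ := hA.mono Set.subset_union_left
    simp only [Interp.satA, ih (hA.mono Set.subset_union_right)]
    exact (e.surjective.forall.trans (by simp only [hρ.sub_mem_toSet_iff])).symm
  | diaPlus ρ A ih =>
    have hρ := hA.mono Set.subset_union_left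
    simp only [Interp.satA, ih (hA.mono Set.subset_union_right)]
    exact (e.surjective.exists.trans (by simp only [hρ.sub_mem_toSet_iff])).symm
  | diaMinus ρ A ih =>
    have hρ := hA.mono Set.subset_union_left
    simp only [Interp.satA, ih (hA.mono Set.subset_union_right)]
    exact (e.surjective.exists.trans (by simp only [hρ.sub_mem_toSet_iff])).symm
  | untl ρ A B ihA ihB =>
    have hρA := hA.mono Set.subset_union_left
    have hρ := hρA.mono Set.subset_union_left
    simp only [Interp.satA, ihA (hρA.mono Set.subset_union_right),
      ihB (hA.mono Set.subset_union_right)]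
    exact (e.surjective.exists.trans
      (by simp only [hρ.sub_mem_toSet_iff, forall_mem_Ioo_apply_iff])).symm
  | sinc ρ A B ihA ihB =>
    have hρA := hA.mono Set.subset_union_left
    have hρ := hρA.mono Set.subset_union_left
    simp only [Interp.satA, ihA (hρA.mono Set.subset_union_right),
      ihB (hA.mono Set.subset_union_right)]
    exact (e.surjective.exists.trans
      (by simp only [hρ.sub_mem_toSet_iff, forall_mem_Ioo_apply_iff])).symm

theorem IsModel.timeChange {M : Interp C P ar} {Pr : Program V C P ar} {D : Data C P ar}
    (hM : IsModel M Pr D) {e : ℝ ≃o ℝ} (hPr : TranslationEquivariant e Pr.nums)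
    (hD : ∀ x ∈ Data.nums D, e x = x) : IsModel (M.timeChange e) Pr D := by
  refine ⟨fun r hr => Interp.satRule_iff.2 fun ν t hbody => ?_, fun f hf t ht => ?_⟩
  · obtain ⟨A, hA, hsat⟩ := Interp.satRule_iff.1 (hM.1 r hr) ν (e t) fun B hB =>
      (M.satA_timeChange e ν (hPr.mono fun x hx => ⟨r, hr, .inl ⟨B, hB, hx⟩⟩) t).1 (hbody B hB)
    exact ⟨A, hA,
      (M.satA_timeChange e ν (hPr.mono fun x hx => ⟨r, hr, .inr ⟨A, hA, hx⟩⟩) t).2 hsat⟩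
  · exact hM.2 f hf (e t) ((RIntv.apply_mem_toSet_iff (fun x hx => hD x ⟨f, hf, hx⟩) t).2 ht)

/-! ### Injective homomorphisms and intersections -/

/-- An injective homomorphism of interpretations: it fixes the constants and preserves the truth
of predicates at every time. Injectivity is what makes it preserve the atoms `τ ≠ τ'`. -/
structure Interp.InjHom (M N : Interp C P ar) where
  toFun : M.Dom → N.Dom
  injective : Function.Injective toFun
  map_constVal : ∀ c, toFun (M.constVal c) = N.constVal c
  map_sat : ∀ {p : P} {a : Fin (ar p) → M.Dom} {t : ℝ},
    M.sat p a t → N.sat p (fun i => toFun (a i)) t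

namespace Interp.InjHom

theorem map_eval {M N : Interp C P ar} (f : M.InjHom N) (ν : V → M.Dom) (τ : Term V C) :
    f.toFun (τ.eval M ν) = τ.eval N (f.toFun ∘ ν) := by
  cases τ with
  | var v => rfl
  | const c => exact f.map_constVal c

theorem map_satA {M N : Interp C P ar} (f : M.InjHom N) {ν : V → M.Dom} {A : Atom V C P ar}
    {t : ℝ} (h : M.satA ν A t) : N.satA (f.toFun ∘ ν) A t := by
  induction A generalizing t with
  | pred p args => simpa only [Interp.satA, f.map_eval] using f.map_sat h
  | top => trivial
  | neq τ τ' => simpa only [Interp.satA, f.map_eval] using f.injective.ne h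
  | boxPlus ρ A ih => exact fun s hs => ih (h s hs)
  | boxMinus ρ A ih => exact fun s hs => ih (h s hs)
  | diaPlus ρ A ih => exact h.imp fun s hs => hs.imp_right ih
  | diaMinus ρ A ih => exact h.imp fun s hs => hs.imp_right ih
  | untl ρ A B ihA ihB =>
    exact h.imp fun s hs => hs.imp_right (And.imp ihB fun hA u hu => ihA (hA u hu))
  | sinc ρ A B ihA ihB =>
    exact h.imp fun s hs => hs.imp_right (And.imp ihB fun hA u hu => ihA (hA u hu))

/-- The family `f` of homomorphisms out of `M` jointly reflects truth, that is, `M` is the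
intersection of its targets along `f`. -/
def JointlyReflecting {ι : Sort*} {M : Interp C P ar} {N : ι → Interp C P ar}
    (f : ∀ i, M.InjHom (N i)) : Prop :=
  ∀ (p : P) (a : Fin (ar p) → M.Dom) (t : ℝ),
    (∀ i, (N i).sat p (fun j => (f i).toFun (a j)) t) → M.sat p a t

variable {ι : Sort*} [Nonempty ι] {M : Interp C P ar} {N : ι → Interp C P ar}
  {f : ∀ i, M.InjHom (N i)}

theorem JointlyReflecting.satA (hf : JointlyReflecting f) {ν : V → M.Dom} {A : Atom V C P ar}
    (hA : A.HeadOK) {t : ℝ} (h : ∀ i, (N i).satA ((f i).toFun ∘ ν) A t) : M.satA ν A t := by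
  induction A generalizing t with
  | pred p args =>
    simp only [Interp.satA, ← map_eval] at h
    exact hf p _ t h
  | top => trivial
  | neq τ τ' =>
    simp only [Interp.satA, ← map_eval] at h
    exact fun heq => h (Classical.arbitrary ι) (congrArg _ heq)
  | boxPlus ρ A ih => exact fun s hs => ih hA fun i => h i s hs
  | boxMinus ρ A ih => exact fun s hs => ih hA fun i => h i s hs
  | diaPlus | diaMinus | untl | sinc => exact hA.elim

theorem JointlyReflecting.isModel (hf : JointlyReflecting f) {Pr : Program V C P ar}
    {D : Data C P ar} (hhead : ∀ r ∈ Pr.rules, ∀ A, r.head = some A → A.HeadOK)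
    (hN : ∀ i, IsModel (N i) Pr D) : IsModel M Pr D := by
  refine ⟨fun r hr => Interp.satRule_iff.2 fun ν t hbody => ?_, fun g hg t ht => ?_⟩
  · have head_sat : ∀ i, ∃ A, r.head = some A ∧ (N i).satA ((f i).toFun ∘ ν) A t := fun i =>
      Interp.satRule_iff.1 ((hN i).1 r hr) _ t fun B hB => (f i).map_satA (hbody B hB)
    obtain ⟨A, hA, -⟩ := head_sat (Classical.arbitrary ι)
    refine ⟨A, hA, hf.satA (hhead r hr A hA) fun i => ?_⟩
    obtain ⟨B, hB, hsat⟩ := head_sat i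
    rwa [Option.some_injective _ (hA.symm.trans hB)]
  · refine hf _ _ t fun i => ?_
    simpa only [(f i).map_constVal] using (hN i).2 g hg t ht

end Interp.InjHom

/-! ### The least model -/

/-- The Herbrand domain: the constants, together with one extra element when there are none,
because the domain of an interpretation is nonempty. It embeds into every interpretation. -/
abbrev HerbrandDom (C : Type) : Type := C ⊕ PLift (IsEmpty C)

theorem nonempty_herbrandDom (C : Type) : Nonempty (HerbrandDom C) :=
  (isEmpty_or_nonempty C).elim (fun h => ⟨.inr ⟨h⟩⟩) fun ⟨c⟩ => ⟨.inl c⟩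

/-- The canonical map of the Herbrand domain into an interpretation. -/
noncomputable def herbrandMap (M : Interp C P ar) : HerbrandDom C → M.Dom :=
  Sum.elim M.constVal fun _ => Classical.choice M.domNonempty

theorem herbrandMap_injective (M : Interp C P ar) : Function.Injective (herbrandMap M) :=
  M.constInj.sumElim (Function.injective_of_subsingleton _) fun c h => (h.down.false c).elim

/-- The interpretation over the Herbrand domain in which an atom is true exactly when it is true
in all models of `(Pr, D)`. It is a model only if `(Pr, D)` is consistent: otherwise every atom
is vacuously true in it. -/
noncomputable def leastModel (Pr : Program V C P ar) (D : Data C P ar) : Interp C P ar where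
  Dom := HerbrandDom C
  domNonempty := nonempty_herbrandDom C
  constVal := Sum.inl
  constInj := Sum.inl_injective
  sat p a t := ∀ M : Interp C P ar, IsModel M Pr D → M.sat p (fun i => herbrandMap M (a i)) t

/-- The canonical injective homomorphism from the least model to a model. -/
noncomputable def leastModelHom {Pr : Program V C P ar} {D : Data C P ar} {M : Interp C P ar}
    (hM : IsModel M Pr D) : (leastModel Pr D).InjHom M where
  toFun := herbrandMap M
  injective := herbrandMap_injective M
  map_constVal _ := rfl
  map_sat h := h M hM

variable {Pr : Program V C P ar} {D : Data C P ar}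

theorem isModel_leastModel (hhead : ∀ r ∈ Pr.rules, ∀ A, r.head = some A → A.HeadOK)
    (hcons : Consistent Pr D) : IsModel (leastModel Pr D) Pr D := by
  have : Nonempty {M : Interp C P ar // IsModel M Pr D} := nonempty_subtype.2 hcons
  have hreflect : Interp.InjHom.JointlyReflecting
      fun M : {M : Interp C P ar // IsModel M Pr D} => leastModelHom M.2 :=
    fun p a t h M hM => h ⟨M, hM⟩
  exact hreflect.isModel hhead Subtype.property

theorem leastModel_sat_apply {e : ℝ ≃o ℝ} (hPr : TranslationEquivariant e Pr.nums)
    (hD : ∀ x ∈ Data.nums D, e x = x) {p : P} {a : Fin (ar p) → HerbrandDom C} {t : ℝ}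
    (h : (leastModel Pr D).sat p a t) : (leastModel Pr D).sat p a (e t) :=
  fun M hM => h (M.timeChange e) (hM.timeChange hPr hD)

theorem leastModel_sat_of_mem_section {d : ℝ} (hd : 0 < d)
    (hmul : ∀ x ∈ Pr.nums ∪ Data.nums D, ∃ k : ℤ, x = (k : ℝ) * d) {p : P}
    {a : Fin (ar p) → HerbrandDom C} {k : ℤ} {s t : ℝ}
    (hs : s ∈ Set.Ioo (((k : ℝ) - 1) * d) (k * d)) (ht : t ∈ Set.Ioo (((k : ℝ) - 1) * d) (k * d))
    (h : (leastModel Pr D).sat p a s) : (leastModel Pr D).sat p a t := by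
  obtain ⟨e, he, he0, rfl⟩ := exists_translationEquivariant_apply_eq hd hs ht
  have hnums : TranslationEquivariant e (Pr.nums ∪ Data.nums D) :=
    he.mono fun x hx => (hmul x hx).imp fun _ => Eq.symm
  exact leastModel_sat_apply (hnums.mono Set.subset_union_left)
    (fun x hx => hnums.apply_eq_self he0 (.inr hx)) h

end DatalogMTL

open DatalogMTL in
theorem statement3_general {V C P : Type} {ar : P → ℕ} (Pr : Program V C P ar)
    (hhead : ∀ r ∈ Pr.rules, ∀ A, r.head = some A → A.HeadOK) (D : Data C P ar)
    (hcons : Consistent Pr D) (d : ℝ) (hd : 0 < d)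
    (hmul : ∀ x ∈ Pr.nums ∪ Data.nums D, ∃ k : ℤ, x = (k : ℝ) * d) :
    ∃ Cm : Interp C P ar, IsModel Cm Pr D ∧
      (∀ M : Interp C P ar, IsModel M Pr D →
        ∀ (p : P) (cs : Fin (ar p) → C) (t : ℝ),
          Cm.sat p (fun i => Cm.constVal (cs i)) t →
            M.sat p (fun i => M.constVal (cs i)) t) ∧
      (∀ (p : P) (cs : Fin (ar p) → C) (k : ℤ),
        (∀ t ∈ Set.Ioo (((k : ℝ) - 1) * d) ((k : ℝ) * d),
            Cm.sat p (fun i => Cm.constVal (cs i)) t) ∨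
        (∀ t ∈ Set.Ioo (((k : ℝ) - 1) * d) ((k : ℝ) * d),
            ¬ Cm.sat p (fun i => Cm.constVal (cs i)) t)) := by
  refine ⟨leastModel Pr D, isModel_leastModel hhead hcons,
    fun M hM p cs t h => (leastModelHom hM).map_sat h, fun p cs k => ?_⟩
  refine or_iff_not_imp_right.2 fun hsome t ht => ?_
  push Not at hsome
  obtain ⟨s, hs, hsat⟩ := hsome
  exact leastModel_sat_of_mem_section hd hmul hs ht hsat

open DatalogMTL in
/-- Lemma on sections: if `(Π, D)` is consistent and every finite number
occurring as an endpoint of a range in `Π` or of an interval in `D` is an integer multiple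
of `d > 0`, then there is a minimal model `Cm` of `(Π, D)` which is homogeneous on the
open sections `((k−1)·d, k·d)`: for constants from `Π` or `D`, each ground atom is either
true throughout such a section or false throughout it. -/
theorem statement3
    {V C P : Type} {ar : P → ℕ}
    (Pr : Program V C P ar) (hPr : Pr.WF)
    (D : Data C P ar) (hD : Data.WF D)
    (hcons : Consistent Pr D)
    (d : ℝ) (hd : 0 < d)
    (hmul : ∀ x ∈ Pr.nums ∪ Data.nums D, ∃ k : ℤ, x = (k : ℝ) * d) :
    ∃ Cm : Interp C P ar, IsModel Cm Pr D ∧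
      -- minimality: every ground atom true in `Cm` at `t` is true in every model at `t`
      (∀ M : Interp C P ar, IsModel M Pr D →
        ∀ (p : P) (cs : Fin (ar p) → C) (t : ℝ),
          Cm.sat p (fun i => Cm.constVal (cs i)) t →
            M.sat p (fun i => M.constVal (cs i)) t) ∧
      -- homogeneity on open sections
      (∀ (p : P) (cs : Fin (ar p) → C), (∀ i, cs i ∈ Pr.consts ∪ Data.consts D) →
        ∀ k : ℤ,
          (∀ t ∈ Set.Ioo (((k : ℝ) - 1) * d) ((k : ℝ) * d),
              Cm.sat p (fun i => Cm.constVal (cs i)) t) ∨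
          (∀ t ∈ Set.Ioo (((k : ℝ) - 1) * d) ((k : ℝ) * d),
              ¬ Cm.sat p (fun i => Cm.constVal (cs i)) t)) := by
  obtain ⟨Cm, hmodel, hmin, hhom⟩ := statement3_general Pr
    (fun r hr A hA => ((hPr r hr).2.2 A hA).1) D hcons d hd hmul
  exact ⟨Cm, hmodel, hmin, fun p cs _ => hhom p cs⟩
end

section
/- Let Π be a datalogMTL program containing a rule r of the form □⁺_{ϱ′} P(τ̄) ← P₁(τ̄₁) ∧ □⁻_ϱ P₂(τ̄₂), and let P′ and P′₂ be fresh predicates, of the same arities as P and P₂ respectively, occurring nowhere in Π. Let Π″ be obtained from Π by replacing r with the three rules P′(τ̄) ← P₁(τ̄₁) ∧ P′₂(τ̄₂); P′₂(τ̄₂) ← □⁻_ϱ P₂(τ̄₂); and P(τ̄) ← ⊤ S_{ϱ′} P′(τ̄). Then for every data instance D not mentioning P′ or P′₂ and every goal Q(σ̄)@x with Q a predicate occurring in Π (in particular, Q ∉ {P′, P′₂}), the certain answers to (Π, Q(σ̄)@x) over D coincide with the certain answers to (Π″, Q(σ̄)@x) over D. -/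
/-!
Every model of the three new rules satisfies the old one: if the body holds at `t`, then `P′₂`
and hence `P′` hold at `t`, so `⊤ S_{ϱ′} P′` holds at every `s` with `s - t ∈ ϱ′`. Conversely, a
model of the old program becomes a model of the new one, with all other predicates unchanged,
once `P′₂(ā)` is interpreted as `□⁻_ϱ P₂(ā)` and `P′(ā)` as `□⁺_{ϱ′} P(ā)`. Interpreting `P′`
through the head of the old rule rather than its body makes it definable on arbitrary tuples
`ā`, although the terms `τ̄` may contain constants and repeated variables.
-/

namespace DatalogMTL

variable {V C P : Type} {ar : P → ℕ}

/-- The interpretation with the domain and constants of `M` in which the predicates are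
reinterpreted by `S`. -/
def Interp.withSat (M : Interp C P ar) (S : (p : P) → (Fin (ar p) → M.Dom) → ℝ → Prop) :
    Interp C P ar :=
  { M with sat := S }

section Reinterpretation

variable (M : Interp C P ar) {S : (p : P) → (Fin (ar p) → M.Dom) → ℝ → Prop}

theorem Term.eval_withSat (ν : V → M.Dom) (τ : Term V C) :
    τ.eval (M.withSat S) ν = τ.eval M ν := by
  cases τ <;> rfl

theorem Interp.satA_pred_withSat (ν : V → M.Dom) (p : P) (args : Fin (ar p) → Term V C) (t : ℝ) :
    (M.withSat S).satA ν (.pred p args) t ↔ S p (fun i => (args i).eval M ν) t := by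
  simp only [← Term.eval_withSat M (S := S)]
  rfl

theorem Interp.satA_withSat (ν : V → M.Dom) {A : Atom V C P ar}
    (hS : ∀ p, A.mentionsPred p → S p = M.sat p) (t : ℝ) :
    (M.withSat S).satA ν A t ↔ M.satA ν A t := by
  induction A generalizing t with
  | pred p args => rw [Interp.satA_pred_withSat, hS p rfl, Interp.satA]
  | top => rfl
  | neq τ τ' => simp only [Interp.satA, ← Term.eval_withSat M (S := S)]; rfl
  | boxPlus ρ A ih | boxMinus ρ A ih | diaPlus ρ A ih | diaMinus ρ A ih =>
    simp only [Interp.satA, ih hS]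
  | untl ρ A B ihA ihB | sinc ρ A B ihA ihB =>
    simp only [Interp.satA, ihA fun p hp => hS p (.inl hp), ihB fun p hp => hS p (.inr hp)]

theorem Interp.satRule_withSat {r : Rule V C P ar}
    (hS : ∀ p, r.mentionsPred p → S p = M.sat p) :
    (M.withSat S).satRule r ↔ M.satRule r := by
  have hbody (ν : V → M.Dom) (t : ℝ) :
      (∀ A ∈ r.body, (M.withSat S).satA ν A t) ↔ ∀ A ∈ r.body, M.satA ν A t :=
    forall₂_congr fun A hA => M.satA_withSat ν (fun p hp => hS p (.inl ⟨A, hA, hp⟩)) t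
  refine forall₂_congr fun ν t => imp_congr (hbody ν t) ?_
  obtain ⟨_ | A, body⟩ := r
  · rfl
  · exact M.satA_withSat ν (fun p hp => hS p (.inr ⟨A, rfl, hp⟩)) t

end Reinterpretation

theorem certainAnswer_iff_of_withSat {Pr Pr'' : Program V C P ar} {D : Data C P ar} {Q : P}
    (hreduct : ∀ M : Interp C P ar, IsModel M Pr'' D → IsModel M Pr D)
    (hexpand : ∀ M : Interp C P ar, IsModel M Pr D →
      ∃ S, S Q = M.sat Q ∧ IsModel (M.withSat S) Pr'' D)
    (qs : Fin (ar Q) → Term V C) (σ : V → C) (ι : RIntv) :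
    CertainAnswer Pr D Q qs σ ι ↔ CertainAnswer Pr'' D Q qs σ ι := by
  refine ⟨fun h t ht M hM => h t ht M (hreduct M hM), fun h t ht M hM ν hν => ?_⟩
  obtain ⟨S, hSQ, hmodel⟩ := hexpand M hM
  exact (M.satA_withSat ν (by rintro p rfl; exact hSQ) t).1 (h t ht (M.withSat S) hmodel ν hν)

/-- The atom `p'(ts)` for a predicate `p'` of the same arity as `p`, where `ts` is a tuple of
arguments for `p`. -/
def Atom.renamedPred {p p' : P} (hp : ar p' = ar p) (ts : Fin (ar p) → Term V C) :
    Atom V C P ar :=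
  .pred p' fun i => ts (Fin.cast hp i)

section Rules

variable {p q p' q' : P} (body : List (Atom V C P ar))
  (ts : Fin (ar p) → Term V C) (us : Fin (ar q) → Term V C) (ρ ρ' : RIntv)
  (hp : ar p' = ar p) (hq : ar q' = ar q)

/-- The rule `□⁺_{ρ'} p(ts) ← body ∧ □⁻_ρ q(us)` to be replaced. -/
def boxRule : Rule V C P ar :=
  ⟨some (.boxPlus ρ' (.pred p ts)), body ++ [.boxMinus ρ (.pred q us)]⟩

/-- The rule `p'(ts) ← body ∧ q'(us)`, the nontemporal core of `boxRule`. -/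
def coreRule : Rule V C P ar :=
  ⟨some (.renamedPred hp ts), body ++ [.renamedPred hq us]⟩

/-- The rule `q'(us) ← □⁻_ρ q(us)`, which takes over the body operator of `boxRule`. -/
def boxMinusRule : Rule V C P ar :=
  ⟨some (.renamedPred hq us), [.boxMinus ρ (.pred q us)]⟩

/-- The rule `p(ts) ← ⊤ S_{ρ'} p'(ts)`, which takes over the head operator of `boxRule`. -/
def sinceRule : Rule V C P ar :=
  ⟨some (.pred p ts), [.sinc ρ' .top (.renamedPred hp ts)]⟩

/-- `Pr''` arises from `Pr` by replacing `boxRule` with `coreRule`, `boxMinusRule` and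
`sinceRule`; programs are compared as sets of rules. -/
def Program.IsBoxRuleSplit (Pr Pr'' : Program V C P ar) : Prop :=
  ∀ r', r' ∈ Pr''.rules ↔
    (r' ∈ Pr.rules ∧ r' ≠ boxRule body ts us ρ ρ') ∨ r' = coreRule body ts us hp hq ∨
      r' = boxMinusRule us ρ hq ∨ r' = sinceRule ts ρ' hp

variable {body ts us ρ ρ' hp hq}

theorem Rule.mentionsPred_boxRule {x : P} :
    (boxRule body ts us ρ ρ').mentionsPred x ↔
      (∃ A ∈ body, A.mentionsPred x) ∨ q = x ∨ p = x := by
  simp [Rule.mentionsPred, boxRule, Atom.mentionsPred, or_and_right, exists_or, or_assoc]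

theorem Program.IsBoxRuleSplit.forall_satRule_iff {Pr Pr'' : Program V C P ar}
    (hsplit : Program.IsBoxRuleSplit body ts us ρ ρ' hp hq Pr Pr'') {M : Interp C P ar} :
    (∀ r ∈ Pr''.rules, M.satRule r) ↔
      (∀ r ∈ Pr.rules, r ≠ boxRule body ts us ρ ρ' → M.satRule r) ∧
        M.satRule (coreRule body ts us hp hq) ∧ M.satRule (boxMinusRule us ρ hq) ∧
          M.satRule (sinceRule ts ρ' hp) := by
  simp only [hsplit _, or_imp, forall_and, forall_eq, and_imp]

theorem Interp.satRule_boxRule {M : Interp C P ar}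
    (hcore : M.satRule (coreRule body ts us hp hq))
    (hboxMinus : M.satRule (boxMinusRule us ρ hq)) (hsince : M.satRule (sinceRule ts ρ' hp)) :
    M.satRule (boxRule body ts us ρ ρ') := by
  intro ν t hb s hs
  obtain ⟨hbody, hbox⟩ := List.forall_mem_append.1 hb
  have hq' : M.satA ν (.renamedPred hq us) t := hboxMinus ν t hbox
  have hp' : M.satA ν (.renamedPred hp ts) t :=
    hcore ν t (List.forall_mem_append.2 ⟨hbody, List.forall_mem_singleton.2 hq'⟩)
  exact hsince ν s (List.forall_mem_singleton.2 ⟨t, hs, hp', fun _ _ => trivial⟩)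

end Rules

section FreshPredicates

variable (M : Interp C P ar) {p q p' q' : P} (ρ ρ' : RIntv)
  (hp : ar p' = ar p) (hq : ar q' = ar q)

open Classical in
/-- The reinterpretation of the predicates of `M` in which `p'(ā)` means `□⁺_{ρ'} p(ā)` and
`q'(ā)` means `□⁻_ρ q(ā)`. -/
noncomputable def Interp.boxSat : (x : P) → (Fin (ar x) → M.Dom) → ℝ → Prop :=
  Function.update
    (Function.update M.sat p' fun a t =>
      ∀ s, s - t ∈ ρ'.toSet → M.sat p (fun i => a (Fin.cast hp.symm i)) s)
    q' fun a t => ∀ s, t - s ∈ ρ.toSet → M.sat q (fun i => a (Fin.cast hq.symm i)) s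

variable {ρ ρ' hp hq}

theorem Interp.boxSat_of_ne {x : P} (hxp : x ≠ p') (hxq : x ≠ q') :
    M.boxSat ρ ρ' hp hq x = M.sat x := by
  classical
  rw [Interp.boxSat, Function.update_of_ne hxq, Function.update_of_ne hxp]

theorem Interp.satA_boxSat_of_not_mentionsPred {A : Atom V C P ar} (hp' : ¬ A.mentionsPred p')
    (hq' : ¬ A.mentionsPred q') (ν : V → M.Dom) (t : ℝ) :
    (M.withSat (M.boxSat ρ ρ' hp hq)).satA ν A t ↔ M.satA ν A t := by
  refine M.satA_withSat ν (fun x hx => M.boxSat_of_ne ?_ ?_) t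
  · exact fun h => hp' (h ▸ hx)
  · exact fun h => hq' (h ▸ hx)

theorem Interp.satRule_boxSat_of_not_mentionsPred {r : Rule V C P ar} (hp' : ¬ r.mentionsPred p')
    (hq' : ¬ r.mentionsPred q') :
    (M.withSat (M.boxSat ρ ρ' hp hq)).satRule r ↔ M.satRule r := by
  refine M.satRule_withSat fun x hx => M.boxSat_of_ne ?_ ?_
  · exact fun h => hp' (h ▸ hx)
  · exact fun h => hq' (h ▸ hx)

theorem Interp.satA_boxSat_renamedPred_iff_boxPlus (hne : p' ≠ q') (ts : Fin (ar p) → Term V C)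
    (ν : V → M.Dom) (t : ℝ) :
    (M.withSat (M.boxSat ρ ρ' hp hq)).satA ν (.renamedPred hp ts) t ↔
      M.satA ν (.boxPlus ρ' (.pred p ts)) t := by
  classical
  rw [Atom.renamedPred, Interp.satA_pred_withSat, Interp.boxSat, Function.update_of_ne hne,
    Function.update_self]
  rfl

theorem Interp.satA_boxSat_renamedPred_iff_boxMinus (us : Fin (ar q) → Term V C)
    (ν : V → M.Dom) (t : ℝ) :
    (M.withSat (M.boxSat ρ ρ' hp hq)).satA ν (.renamedPred hq us) t ↔
      M.satA ν (.boxMinus ρ (.pred q us)) t := by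
  classical
  rw [Atom.renamedPred, Interp.satA_pred_withSat, Interp.boxSat, Function.update_self]
  rfl

variable {body : List (Atom V C P ar)} {ts : Fin (ar p) → Term V C} {us : Fin (ar q) → Term V C}

theorem Interp.satRule_coreRule_boxSat (hne : p' ≠ q')
    (hp' : ∀ A ∈ body, ¬ A.mentionsPred p') (hq' : ∀ A ∈ body, ¬ A.mentionsPred q')
    (hM : M.satRule (boxRule body ts us ρ ρ')) :
    (M.withSat (M.boxSat ρ ρ' hp hq)).satRule (coreRule body ts us hp hq) := by
  intro ν t hb
  obtain ⟨hbody, hbox⟩ := List.forall_mem_append.1 hb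
  refine (M.satA_boxSat_renamedPred_iff_boxPlus hne ts ν t).2 (hM ν t ?_)
  refine List.forall_mem_append.2 ⟨fun A hA => ?_, List.forall_mem_singleton.2 ?_⟩
  · exact (M.satA_boxSat_of_not_mentionsPred (hp' A hA) (hq' A hA) ν t).1 (hbody A hA)
  · exact (M.satA_boxSat_renamedPred_iff_boxMinus us ν t).1 (hbox _ List.mem_cons_self)

theorem Interp.satRule_boxMinusRule_boxSat (hqp' : q ≠ p') (hqq' : q ≠ q') :
    (M.withSat (M.boxSat ρ ρ' hp hq)).satRule (boxMinusRule us ρ hq) := fun ν t hb =>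
  (M.satA_boxSat_renamedPred_iff_boxMinus us ν t).2 <|
    (M.satA_boxSat_of_not_mentionsPred (A := .boxMinus ρ (.pred q us)) hqp' hqq' ν t).1 <|
      hb _ List.mem_cons_self

theorem Interp.satRule_sinceRule_boxSat (hne : p' ≠ q') (hpp' : p ≠ p') (hpq' : p ≠ q') :
    (M.withSat (M.boxSat ρ ρ' hp hq)).satRule (sinceRule ts ρ' hp) := by
  intro ν t hb
  obtain ⟨t', ht', hsat, -⟩ := List.forall_mem_singleton.1 hb
  have hbox := (M.satA_boxSat_renamedPred_iff_boxPlus hne ts ν t').1 hsat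
  exact (M.satA_boxSat_of_not_mentionsPred (A := .pred p ts) hpp' hpq' ν t).2 (hbox t ht')

end FreshPredicates

section Models

variable {p q p' q' : P} {body : List (Atom V C P ar)} {ts : Fin (ar p) → Term V C}
  {us : Fin (ar q) → Term V C} {ρ ρ' : RIntv} {hp : ar p' = ar p} {hq : ar q' = ar q}
  {Pr Pr'' : Program V C P ar} {D : Data C P ar} {M : Interp C P ar}

theorem IsModel.of_isBoxRuleSplit
    (hsplit : Program.IsBoxRuleSplit body ts us ρ ρ' hp hq Pr Pr'') (hM : IsModel M Pr'' D) :
    IsModel M Pr D := by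
  obtain ⟨hkept, hcore, hboxMinus, hsince⟩ := hsplit.forall_satRule_iff.1 hM.1
  refine ⟨fun r hr => ?_, hM.2⟩
  obtain rfl | hne := eq_or_ne r (boxRule body ts us ρ ρ')
  · exact Interp.satRule_boxRule hcore hboxMinus hsince
  · exact hkept r hr hne

theorem IsModel.withSat_boxSat
    (hsplit : Program.IsBoxRuleSplit body ts us ρ ρ' hp hq Pr Pr'')
    (hmem : boxRule body ts us ρ ρ' ∈ Pr.rules) (hne : p' ≠ q')
    (hp' : ¬ Pr.MentionsPred p') (hq' : ¬ Pr.MentionsPred q')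
    (hDp' : ¬ Data.MentionsPred D p') (hDq' : ¬ Data.MentionsPred D q') (hM : IsModel M Pr D) :
    IsModel (M.withSat (M.boxSat ρ ρ' hp hq)) Pr'' D := by
  have hrule {x : P} (hx : ¬ Pr.MentionsPred x) {r} (hr : r ∈ Pr.rules) : ¬ r.mentionsPred x :=
    fun h => hx ⟨r, hr, h⟩
  have hbox {x : P} (hx : ¬ Pr.MentionsPred x) :
      (∀ A ∈ body, ¬ A.mentionsPred x) ∧ q ≠ x ∧ p ≠ x := by
    simpa [Rule.mentionsPred_boxRule] using hrule hx hmem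
  obtain ⟨hbodyp', hqp', hpp'⟩ := hbox hp'
  obtain ⟨hbodyq', hqq', hpq'⟩ := hbox hq'
  refine ⟨hsplit.forall_satRule_iff.2 ⟨fun r hr _ => ?_, ?_, ?_, ?_⟩, fun f hf t ht => ?_⟩
  · exact (M.satRule_boxSat_of_not_mentionsPred (hrule hp' hr) (hrule hq' hr)).2 (hM.1 r hr)
  · exact M.satRule_coreRule_boxSat hne hbodyp' hbodyq' (hM.1 _ hmem)
  · exact M.satRule_boxMinusRule_boxSat hqp' hqq'
  · exact M.satRule_sinceRule_boxSat hne hpp' hpq'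
  · have hsat : M.boxSat ρ ρ' hp hq f.pred = M.sat f.pred :=
      M.boxSat_of_ne (fun h => hDp' ⟨f, hf, h⟩) fun h => hDq' ⟨f, hf, h⟩
    simpa only [Interp.withSat, hsat] using hM.2 f hf t ht

end Models

end DatalogMTL

open DatalogMTL in
theorem statement5_general
    {V C P : Type} {ar : P → ℕ} {p q p' q' : P} {body : List (Atom V C P ar)}
    {ts : Fin (ar p) → Term V C} {us : Fin (ar q) → Term V C} {ρ ρ' : RIntv}
    {hp : ar p' = ar p} {hq : ar q' = ar q} {Pr Pr'' : Program V C P ar} {D : Data C P ar}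
    (hsplit : Program.IsBoxRuleSplit body ts us ρ ρ' hp hq Pr Pr'')
    (hmem : boxRule body ts us ρ ρ' ∈ Pr.rules) (hne : p' ≠ q')
    (hp' : ¬ Pr.MentionsPred p') (hq' : ¬ Pr.MentionsPred q')
    (hDp' : ¬ Data.MentionsPred D p') (hDq' : ¬ Data.MentionsPred D q')
    {Q : P} (hQp' : Q ≠ p') (hQq' : Q ≠ q')
    (qs : Fin (ar Q) → Term V C) (σ : V → C) (ι : RIntv) :
    CertainAnswer Pr D Q qs σ ι ↔ CertainAnswer Pr'' D Q qs σ ι :=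
  certainAnswer_iff_of_withSat (fun _ => IsModel.of_isBoxRuleSplit hsplit)
    (fun M hM => ⟨M.boxSat ρ ρ' hp hq, M.boxSat_of_ne hQp' hQq',
      hM.withSat_boxSat hsplit hmem hne hp' hq' hDp' hDq'⟩) qs σ ι

open DatalogMTL in
/-- normal-form transformation: replacing the rule
`□⁺_{ϱ′} Pp(ts) ← P₁(ts₁) ∧ □⁻_ϱ P₂(ts₂)` by the three rules
`P′(ts) ← P₁(ts₁) ∧ P′₂(ts₂)`, `P′₂(ts₂) ← □⁻_ϱ P₂(ts₂)`, `Pp(ts) ← ⊤ S_{ϱ′} P′(ts)`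
(with fresh predicates `P′`, `P′₂`) preserves the certain answers to every goal whose
predicate occurs in the original program, over every data instance not mentioning
the fresh predicates. -/
theorem statement5
    {V C P : Type} {ar : P → ℕ}
    (Pr : Program V C P ar) (hPr : Pr.WF)
    (Pp : P) (ts : Fin (ar Pp) → Term V C)
    (P₁ : P) (ts₁ : Fin (ar P₁) → Term V C)
    (P₂ : P) (ts₂ : Fin (ar P₂) → Term V C)
    (ρ ρ' : RIntv)
    (r : Rule V C P ar)
    (hr : r = ⟨some (Atom.boxPlus ρ' (Atom.pred Pp ts)),
               [Atom.pred P₁ ts₁, Atom.boxMinus ρ (Atom.pred P₂ ts₂)]⟩)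
    (hrmem : r ∈ Pr.rules)
    (P' P'₂ : P) (hne : P' ≠ P'₂)
    (hP'ar : ar P' = ar Pp) (hP'₂ar : ar P'₂ = ar P₂)
    (hfresh1 : ¬ Pr.MentionsPred P') (hfresh2 : ¬ Pr.MentionsPred P'₂)
    (Pr'' : Program V C P ar)
    (hPr'' : ∀ r' : Rule V C P ar,
      r' ∈ Pr''.rules ↔
        ((r' ∈ Pr.rules ∧ r' ≠ r) ∨
         r' = ⟨some (Atom.pred P' (fun i => ts (Fin.cast hP'ar i))),
               [Atom.pred P₁ ts₁, Atom.pred P'₂ (fun i => ts₂ (Fin.cast hP'₂ar i))]⟩ ∨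
         r' = ⟨some (Atom.pred P'₂ (fun i => ts₂ (Fin.cast hP'₂ar i))),
               [Atom.boxMinus ρ (Atom.pred P₂ ts₂)]⟩ ∨
         r' = ⟨some (Atom.pred Pp ts),
               [Atom.sinc ρ' Atom.top (Atom.pred P' (fun i => ts (Fin.cast hP'ar i)))]⟩)) :
    ∀ D : Data C P ar, Data.WF D →
      ¬ Data.MentionsPred D P' → ¬ Data.MentionsPred D P'₂ →
      ∀ Q : P, Pr.MentionsPred Q →
        ∀ (qs : Fin (ar Q) → Term V C) (σ : V → C) (ι : RIntv),
          (CertainAnswer Pr D Q qs σ ι ↔ CertainAnswer Pr'' D Q qs σ ι) := by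
  intro D _ hD1 hD2 Q hQ
  subst hr
  exact statement5_general (body := [Atom.pred P₁ ts₁]) hPr'' hrmem hne hfresh1 hfresh2 hD1 hD2
    (fun h => hfresh1 (h ▸ hQ)) (fun h => hfresh2 (h ▸ hQ))
end

section
/- Let A, B : ℝ → Prop, let ι₁ ⊆ ℝ be an order-connected set (an interval), let ι₂ ⊆ ℝ be any set, and let ϱ ⊆ [0, ∞) be any set of nonnegative reals. Suppose A(s) holds for every s ∈ ι₁ and B(s) holds for every s ∈ ι₂. Then for every t in the topological closure of ι₁ such that there exists t′ in (closure of ι₁) ∩ ι₂ with t − t′ ∈ ϱ, the 'since' formula A S_ϱ B holds at t: there exists t″ with t − t″ ∈ ϱ, B(t″), and A(s) for all s in the open interval (t″, t). -/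
open Set

/-- Linear-order version of `Convex.Ioo_subset_of_mem_closure`, which Mathlib has over ordered
fields only. -/
theorem Ioo_subset_of_ordConnected_of_mem_closure {α : Type*} [LinearOrder α] [TopologicalSpace α]
    [ClosedIciTopology α] [ClosedIicTopology α] {S : Set α} {a b : α} (hS : S.OrdConnected)
    (ha : a ∈ closure S) (hb : b ∈ closure S) : Ioo a b ⊆ S := by
  rintro s ⟨has, hsb⟩
  obtain ⟨x, hxs, hx⟩ : (Iio s ∩ S).Nonempty := mem_closure_iff.1 ha _ isOpen_Iio has
  obtain ⟨y, hsy, hy⟩ : (Ioi s ∩ S).Nonempty := mem_closure_iff.1 hb _ isOpen_Ioi hsb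
  exact hS.out hx hy ⟨hxs.le, hsy.le⟩

/-- The metric temporal formula `A S_ϱ B` at time `t`, with formulas encoded as predicates on
the time domain `T`. The guard `A` is required only strictly between the witness and `t`. -/
def Since {T : Type*} [Preorder T] [Sub T] (ϱ : Set T) (A B : T → Prop) (t : T) : Prop :=
  ∃ t', t - t' ∈ ϱ ∧ B t' ∧ ∀ s ∈ Ioo t' t, A s

theorem statement11_general {T : Type*} [LinearOrder T] [Sub T] [TopologicalSpace T]
    [ClosedIciTopology T] [ClosedIicTopology T] {A B : T → Prop} {ι₁ ι₂ ϱ : Set T} {t t' : T}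
    (h₁ : ι₁.OrdConnected) (hA : ∀ s ∈ ι₁, A s) (hB : ∀ s ∈ ι₂, B s)
    (ht : t ∈ closure ι₁) (ht' : t' ∈ closure ι₁ ∩ ι₂) (hk : t - t' ∈ ϱ) : Since ϱ A B t :=
  have guard_subset : Ioo t' t ⊆ ι₁ := Ioo_subset_of_ordConnected_of_mem_closure h₁ ht'.1 ht
  ⟨t', hk, hB t' ht'.2, fun s hs => hA s (guard_subset hs)⟩

/-- Soundness of the chase rule `(S_ϱ)`: if `A` holds throughout an interval `ι₁` and `B`
throughout a set `ι₂`, then `A S_ϱ B` holds at every point `t` of the closure of `ι₁`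
reachable as `t = t′ + k` with `t′ ∈ (closure ι₁) ∩ ι₂` and `k ∈ ϱ`. -/
theorem statement11 (A B : ℝ → Prop) (ι₁ : Set ℝ) (h₁ : ι₁.OrdConnected)
    (ι₂ : Set ℝ) (ϱ : Set ℝ) (hϱ : ∀ k ∈ ϱ, 0 ≤ k)
    (hA : ∀ s ∈ ι₁, A s) (hB : ∀ s ∈ ι₂, B s) :
    ∀ t ∈ closure ι₁, (∃ t' ∈ closure ι₁ ∩ ι₂, t - t' ∈ ϱ) →
      ∃ t'' : ℝ, t - t'' ∈ ϱ ∧ B t'' ∧ ∀ s ∈ Set.Ioo t'' t, A s := by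
  rintro t ht ⟨t', ht', hk⟩
  exact statement11_general h₁ hA hB ht ht' hk
end

section
/- Let A, B : ℝ → Prop, let ι₁ ⊆ ℝ be an order-connected set (an interval), let ι₂ ⊆ ℝ be any set, and let ϱ ⊆ [0, ∞) be any set of nonnegative reals. Suppose A(s) holds for every s ∈ ι₁ and B(s) holds for every s ∈ ι₂. Then for every t in the topological closure of ι₁ such that there exists t′ in (closure of ι₁) ∩ ι₂ with t′ − t ∈ ϱ, the 'until' formula A U_ϱ B holds at t: there exists t″ with t″ − t ∈ ϱ, B(t″), and A(s) for all s in the open interval (t, t″). -/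
section

variable {T : Type*} [LinearOrder T] [TopologicalSpace T] [OrderClosedTopology T]

theorem Ioo_subset_of_ordConnected_of_mem_closure_s12 {s : Set T} (hs : s.OrdConnected) {a b : T}
    (ha : a ∈ closure s) (hb : b ∈ closure s) : Set.Ioo a b ⊆ s := by
  rintro x ⟨hax, hxb⟩
  obtain ⟨a', ha'x, ha's⟩ := mem_closure_iff.1 ha (Set.Iio x) isOpen_Iio hax
  obtain ⟨b', hxb', hb's⟩ := mem_closure_iff.1 hb (Set.Ioi x) isOpen_Ioi hxb
  exact hs.out ha's hb's ⟨ha'x.le, hxb'.le⟩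

theorem statement12_general [AddGroup T] {A B : T → Prop} {ι₁ ι₂ ϱ : Set T}
    (h₁ : ι₁.OrdConnected) (hA : ∀ s ∈ ι₁, A s) (hB : ∀ s ∈ ι₂, B s) :
    ∀ t ∈ closure ι₁, (∃ t' ∈ closure ι₁ ∩ ι₂, t' - t ∈ ϱ) →
      ∃ t'' : T, t'' - t ∈ ϱ ∧ B t'' ∧ ∀ s ∈ Set.Ioo t t'', A s := by
  rintro t ht ⟨t', ⟨ht', ht'₂⟩, hϱ⟩
  have hIoo : Set.Ioo t t' ⊆ ι₁ := Ioo_subset_of_ordConnected_of_mem_closure_s12 h₁ ht ht'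
  exact ⟨t', hϱ, hB t' ht'₂, fun s hs ↦ hA s (hIoo hs)⟩

end

/-- Soundness of the chase rule `(U_ϱ)`: if `A` holds throughout an interval `ι₁` and `B`
throughout a set `ι₂`, then `A U_ϱ B` holds at every point `t` of the closure of `ι₁`
such that `t = t′ − k` for some `t′ ∈ (closure ι₁) ∩ ι₂` and `k ∈ ϱ`. -/
theorem statement12 (A B : ℝ → Prop) (ι₁ : Set ℝ) (h₁ : ι₁.OrdConnected)
    (ι₂ : Set ℝ) (ϱ : Set ℝ) (hϱ : ∀ k ∈ ϱ, 0 ≤ k)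
    (hA : ∀ s ∈ ι₁, A s) (hB : ∀ s ∈ ι₂, B s) :
    ∀ t ∈ closure ι₁, (∃ t' ∈ closure ι₁ ∩ ι₂, t' - t ∈ ϱ) →
      ∃ t'' : ℝ, t'' - t ∈ ϱ ∧ B t'' ∧ ∀ s ∈ Set.Ioo t t'', A s :=
  statement12_general h₁ hA hB
end
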